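/- Scalability of the uplink interference function: Under the C-RAN setup with h_k ≠ 0 and target rate R_k > 0 for each user k, for every nonnegative power vector p ∈ ℝ^K and every real α > 1, α · Γ_k(p) > Γ_k(α·p) for every k. -/

import Mathlib

open Finset Matrix ComplexOrder

noncomputable section

namespace CRAN

variable {M K : ℕ}

/-- The channel vector `h_k = (h_{1,k}, …, h_{M,k}) ∈ ℂ^M` of user `k`. -/
def chanVec (h : Fin M → Fin K → ℂ) (k : Fin K) : Fin M → ℂ := fun m => h m k

/-- Quantization noise diagonal matrix `Q(p) = Diag(q_1(p),…,q_M(p))` with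
`q_m(p) = (Σ_i p_i |h_{m,i}|² + σ²)/η_m` and `η_m = 2^{C_m} − 1`. -/
def Qmat (h : Fin M → Fin K → ℂ) (σ2 : ℝ) (C : Fin M → ℝ) (p : Fin K → ℝ) :
    Matrix (Fin M) (Fin M) ℂ :=
  Matrix.diagonal fun m =>
    (((∑ i, p i * ‖h m i‖ ^ 2 + σ2) / ((2 : ℝ) ^ (C m) - 1) : ℝ) : ℂ)

/-- Interference-plus-quantization-plus-noise covariance matrix
`Σ_{j≠k} p_j h_j h_jᴴ + Q(p) + σ² I` for user `k`. -/
def covMat (h : Fin M → Fin K → ℂ) (σ2 : ℝ) (C : Fin M → ℝ) (p : Fin K → ℝ)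
    (k : Fin K) : Matrix (Fin M) (Fin M) ℂ :=
  (∑ j ∈ univ.erase k, (p j : ℂ) • Matrix.vecMulVec (chanVec h j) (star (chanVec h j)))
    + Qmat h σ2 C p + (σ2 : ℂ) • 1

/-- The uplink interference function
`Γ_k(p) = (2^{R_k} − 1) / (h_kᴴ (Σ_{j≠k} p_j h_j h_jᴴ + Q(p) + σ²I)⁻¹ h_k)`,
where the (real, positive) denominator is taken as the real part of the quadratic
form. -/
def Gam (h : Fin M → Fin K → ℂ) (σ2 : ℝ) (C : Fin M → ℝ) (R : Fin K → ℝ)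
    (p : Fin K → ℝ) (k : Fin K) : ℝ :=
  ((2 : ℝ) ^ (R k) - 1) /
    (star (chanVec h k) ⬝ᵥ ((covMat h σ2 C p k)⁻¹ *ᵥ chanVec h k)).re

/-!
The covariance matrix `covMat h σ2 C p k` is affine in `p`, and its constant term
`covMat h σ2 C 0 k`, the thermal noise together with its quantization, is positive definite.
Scaling the powers by `α > 1` therefore falls short of scaling the covariance by `α`:
`α • covMat p = covMat (α • p) + (α - 1) • covMat 0`. Since inversion of positive definite matrices
is strictly antitone, `h_kᴴ (covMat p)⁻¹ h_k < α · h_kᴴ (covMat (α • p))⁻¹ h_k`; take reciprocals.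
-/

section PosDef

variable {n 𝕜 : Type*} [Fintype n] [DecidableEq n] [Field 𝕜] [PartialOrder 𝕜] [StarRing 𝕜]
  [AddLeftMono 𝕜] {A D : Matrix n n 𝕜}

lemma inv_sub_inv_add_eq_of_posDef (hA : A.PosDef) (hD : D.PosDef) :
    A⁻¹ - (A + D)⁻¹ = A⁻¹ * (D⁻¹ + A⁻¹)⁻¹ * A⁻¹ := by
  have woodbury := add_mul_mul_inv_eq_sub A 1 D 1 hA.isUnit hD.isUnit
    (by simpa only [Matrix.one_mul, Matrix.mul_one] using (hD.inv.add hA.inv).isUnit)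
  simp only [Matrix.one_mul, Matrix.mul_one] at woodbury
  rw [woodbury, sub_sub_cancel]

lemma posDef_inv_sub_inv_add (hA : A.PosDef) (hD : D.PosDef) : (A⁻¹ - (A + D)⁻¹).PosDef := by
  have hpos := (hD.inv.add hA.inv).inv.mul_mul_conjTranspose_same
    (vecMul_injective_iff_isUnit.2 hA.inv.isUnit)
  rwa [hA.inv.isHermitian.eq, ← inv_sub_inv_add_eq_of_posDef hA hD] at hpos

lemma dotProduct_inv_add_mulVec_lt (hA : A.PosDef) (hD : D.PosDef) {v : n → 𝕜} (hv : v ≠ 0) :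
    star v ⬝ᵥ ((A + D)⁻¹ *ᵥ v) < star v ⬝ᵥ (A⁻¹ *ᵥ v) := by
  have hpos := (posDef_inv_sub_inv_add hA hD).dotProduct_mulVec_pos hv
  rwa [sub_mulVec, dotProduct_sub, sub_pos] at hpos

end PosDef

lemma two_rpow_sub_one_pos {c : ℝ} (hc : 0 < c) : 0 < (2 : ℝ) ^ c - 1 :=
  sub_pos.2 (Real.one_lt_rpow one_lt_two hc)

section Covariance

variable (h : Fin M → Fin K → ℂ) (σ2 : ℝ) (C : Fin M → ℝ) (p : Fin K → ℝ) (α : ℝ) (k : Fin K)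

lemma smul_Qmat :
    (α : ℂ) • Qmat h σ2 C p = Qmat h σ2 C (α • p) + ((α - 1 : ℝ) : ℂ) • Qmat h σ2 C 0 := by
  simp only [Qmat, ← diagonal_smul, diagonal_add, Pi.smul_def, smul_eq_mul, Pi.zero_apply,
    zero_mul, sum_const_zero, zero_add, mul_assoc, ← mul_sum]
  congr! 2
  push_cast
  ring

lemma smul_covMat :
    (α : ℂ) • covMat h σ2 C p k =
      covMat h σ2 C (α • p) k + ((α - 1 : ℝ) : ℂ) • covMat h σ2 C 0 k := by
  simp only [covMat, smul_add, smul_Qmat, smul_sum, smul_smul, Pi.smul_apply, smul_eq_mul,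
    Complex.ofReal_mul, Complex.ofReal_sub, Complex.ofReal_one, Pi.zero_apply, Complex.ofReal_zero,
    zero_smul, sum_const_zero, zero_add]
  module

variable {σ2 C p α k}

lemma posDef_Qmat (hσ : 0 < σ2) (hC : ∀ m, 0 < C m) (hp : 0 ≤ p) : (Qmat h σ2 C p).PosDef := by
  refine .diagonal fun m => Complex.zero_lt_real.2 (div_pos ?_ (two_rpow_sub_one_pos (hC m)))
  exact add_pos_of_nonneg_of_pos (sum_nonneg fun i _ => mul_nonneg (hp i) (sq_nonneg _)) hσ

lemma posDef_covMat (hσ : 0 < σ2) (hC : ∀ m, 0 < C m) (hp : 0 ≤ p) :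
    (covMat h σ2 C p k).PosDef := by
  have interference_posSemidef : (∑ j ∈ univ.erase k,
      (p j : ℂ) • vecMulVec (chanVec h j) (star (chanVec h j))).PosSemidef :=
    posSemidef_sum _ fun j _ =>
      (posSemidef_vecMulVec_self_star _).smul (Complex.zero_le_real.2 (hp j))
  exact (PosDef.posSemidef_add interference_posSemidef (posDef_Qmat h hσ hC hp)).add
    (PosDef.one.smul (Complex.zero_lt_real.2 hσ))

end Covariance

/-- The SINR per unit of transmit power that user `k` obtains from MMSE combining,
`h_kᴴ (Σ_{j≠k} p_j h_j h_jᴴ + Q(p) + σ²I)⁻¹ h_k`. As in `Gam`, this real number is encoded as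
the real part of a complex quadratic form. -/
def unitSINR (h : Fin M → Fin K → ℂ) (σ2 : ℝ) (C : Fin M → ℝ) (p : Fin K → ℝ) (k : Fin K) : ℝ :=
  (star (chanVec h k) ⬝ᵥ ((covMat h σ2 C p k)⁻¹ *ᵥ chanVec h k)).re

section UnitSINR

variable {h : Fin M → Fin K → ℂ} {σ2 : ℝ} {C : Fin M → ℝ} {p : Fin K → ℝ} {α : ℝ} {k : Fin K}

lemma Gam_eq_div_unitSINR (R : Fin K → ℝ) :
    Gam h σ2 C R p k = ((2 : ℝ) ^ R k - 1) / unitSINR h σ2 C p k :=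
  rfl

lemma unitSINR_pos (hσ : 0 < σ2) (hC : ∀ m, 0 < C m) (hp : 0 ≤ p) (hk : chanVec h k ≠ 0) :
    0 < unitSINR h σ2 C p k :=
  (Complex.lt_def.1 ((posDef_covMat h hσ hC hp).inv.dotProduct_mulVec_pos hk)).1

lemma inv_mul_unitSINR_lt_unitSINR_smul (hσ : 0 < σ2) (hC : ∀ m, 0 < C m) (hp : 0 ≤ p)
    (hk : chanVec h k ≠ 0) (hα : 1 < α) :
    α⁻¹ * unitSINR h σ2 C p k < unitSINR h σ2 C (α • p) k := by
  have hα₀ : 0 < α := one_pos.trans hα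
  have scaled_posDef : (covMat h σ2 C (α • p) k).PosDef :=
    posDef_covMat h hσ hC (smul_nonneg hα₀.le hp)
  have gap_posDef : (((α - 1 : ℝ) : ℂ) • covMat h σ2 C 0 k).PosDef :=
    (posDef_covMat h hσ hC le_rfl).smul (Complex.zero_lt_real.2 (sub_pos.2 hα))
  have inv_smul_covMat :
      ((α : ℂ) • covMat h σ2 C p k)⁻¹ = ((α⁻¹ : ℝ) : ℂ) • (covMat h σ2 C p k)⁻¹ := by
    rw [Complex.ofReal_inv]
    exact inv_smul' _ (Units.mk0 (α : ℂ) (Complex.ofReal_ne_zero.2 hα₀.ne'))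
      ((isUnit_iff_isUnit_det _).1 (posDef_covMat h hσ hC hp).isUnit)
  have quadratic_lt := dotProduct_inv_add_mulVec_lt scaled_posDef gap_posDef hk
  rw [← smul_covMat, inv_smul_covMat, smul_mulVec, dotProduct_smul, smul_eq_mul] at quadratic_lt
  simpa only [unitSINR, Complex.re_ofReal_mul] using (Complex.lt_def.1 quadratic_lt).1

end UnitSINR

/-- **Scalability of the uplink interference function.** Under the C-RAN setup with
`h_k ≠ 0` and target rates `R_k > 0`, for every nonnegative power vector `p` and every
real `α > 1`, `α · Γ_k(p) > Γ_k(α·p)` for every `k`. -/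
theorem gamma_scalable (M K : ℕ) (h : Fin M → Fin K → ℂ) (σ2 : ℝ) (hσ : 0 < σ2)
    (C : Fin M → ℝ) (hC : ∀ m, 0 < C m) (R : Fin K → ℝ) (hR : ∀ k, 0 < R k)
    (hh : ∀ k, chanVec h k ≠ 0)
    (p : Fin K → ℝ) (hp : ∀ i, 0 ≤ p i) (α : ℝ) (hα : 1 < α) :
    ∀ k, Gam h σ2 C R (α • p) k < α * Gam h σ2 C R p k := by
  intro k
  have rate_pos := two_rpow_sub_one_pos (hR k)
  have sinr_pos := unitSINR_pos hσ hC hp (hh k)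
  have sinr_lt := inv_mul_unitSINR_lt_unitSINR_smul hσ hC hp (hh k) hα
  simp only [Gam_eq_div_unitSINR]
  calc ((2 : ℝ) ^ R k - 1) / unitSINR h σ2 C (α • p) k
      < ((2 : ℝ) ^ R k - 1) / (α⁻¹ * unitSINR h σ2 C p k) :=
        div_lt_div_of_pos_left rate_pos (by positivity) sinr_lt
    _ = α * (((2 : ℝ) ^ R k - 1) / unitSINR h σ2 C p k) := by field_simp

end CRAN
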